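/- arXiv:1307.6236 — 5 statements merged into one kernel-verified Lean document; each statement's English description precedes it below -/
import Mathlib

section
/- Let B, k > 0 and let u, ξ : [0, ∞) → ℝ be differentiable functions satisfying the kinetic Gray–Scott system u'(t) = -(B+k) u(t) + u(t)² ξ(t) and ξ'(t) = -ξ(t) u(t)² + B(1 - ξ(t)) with u(0) ≥ 0 and ξ(0) ≥ 0. Then u(t) ≥ 0 and ξ(t) ≥ 0 for all t ≥ 0, and u(t) + ξ(t) ≤ max{u(0) + ξ(0), 1} for all t ≥ 0; in particular, the solution is uniformly bounded on [0, ∞). -/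
/-!
Each of the three inequalities holds initially, and the vector field never pushes a solution
further across the corresponding boundary. Where `ξ < 0`, the equation gives `ξ' ≥ 0`. Once
`ξ ≥ 0` is known, `u' ≥ 0` wherever `u < 0`. Finally `(u + ξ)' = B (1 - (u + ξ)) - k u`, and with
`u ≥ 0` this is nonpositive wherever `u + ξ > 1`.
-/

open Set

section Barrier

variable {f f' : ℝ → ℝ} {a b M m : ℝ}

theorem image_le_of_deriv_right_nonpos_of_lt (hf : ContinuousOn f (Icc a b))
    (hf' : ∀ x ∈ Ico a b, HasDerivWithinAt f (f' x) (Ici x) x) (ha : f a ≤ M)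
    (hf'_nonpos : ∀ x ∈ Ico a b, M < f x → f' x ≤ 0) {x : ℝ} (hx : x ∈ Icc a b) : f x ≤ M := by
  -- An affine barrier of slope `ε > 0` lying strictly above `M` cannot be crossed; let `ε → 0`.
  have below_barrier (ε : ℝ) (hε : 0 < ε) : f x ≤ M + ε * (1 + (x - a)) := by
    have barrier_deriv (y : ℝ) : HasDerivAt (fun y ↦ M + ε * (1 + (y - a))) ε y := by
      simpa using ((((hasDerivAt_id y).sub_const a).const_add 1).const_mul ε).const_add M
    refine image_le_of_deriv_right_lt_deriv_boundary hf hf' ?_ barrier_deriv ?_ hx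
    · simpa using ha.trans (le_add_of_nonneg_right hε.le)
    · intro y hy hcontact
      have above : M < f y := by
        rw [hcontact]
        exact lt_add_of_pos_right M (mul_pos hε (by linarith [hy.1]))
      exact (hf'_nonpos y hy above).trans_lt hε
  have hpos : 0 < 1 + (x - a) := by linarith [hx.1]
  refine le_of_forall_pos_le_add fun δ hδ ↦ ?_
  simpa [hpos.ne'] using below_barrier (δ / (1 + (x - a))) (div_pos hδ hpos)

theorem le_of_hasDerivWithinAt_Ici_nonpos_of_lt
    (hf : ∀ t ∈ Ici a, HasDerivWithinAt f (f' t) (Ici a) t) (ha : f a ≤ M)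
    (hf'_nonpos : ∀ t ∈ Ici a, M < f t → f' t ≤ 0) {t : ℝ} (ht : t ∈ Ici a) : f t ≤ M :=
  image_le_of_deriv_right_nonpos_of_lt
    (fun x hx ↦ (hf x hx.1).continuousWithinAt.mono Icc_subset_Ici_self)
    (fun x hx ↦ (hf x hx.1).mono (Ici_subset_Ici.2 hx.1)) ha
    (fun x hx ↦ hf'_nonpos x hx.1) (right_mem_Icc.2 ht)

theorem ge_of_hasDerivWithinAt_Ici_nonneg_of_lt
    (hf : ∀ t ∈ Ici a, HasDerivWithinAt f (f' t) (Ici a) t) (ha : m ≤ f a)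
    (hf'_nonneg : ∀ t ∈ Ici a, f t < m → 0 ≤ f' t) {t : ℝ} (ht : t ∈ Ici a) : m ≤ f t :=
  neg_le_neg_iff.1 <| le_of_hasDerivWithinAt_Ici_nonpos_of_lt (fun s hs ↦ (hf s hs).neg)
    (neg_le_neg ha) (fun s hs hlt ↦ neg_nonpos.2 (hf'_nonneg s hs (neg_lt_neg_iff.1 hlt))) ht

end Barrier

namespace GrayScott

variable {B k r a M : ℝ} {u ξ : ℝ → ℝ}

theorem substrate_nonneg (hB : 0 ≤ B)
    (hξ : ∀ t ∈ Ici a, HasDerivWithinAt ξ (-(ξ t) * (u t) ^ 2 + B * (1 - ξ t)) (Ici a) t)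
    (hξa : 0 ≤ ξ a) {t : ℝ} (ht : t ∈ Ici a) : 0 ≤ ξ t := by
  refine ge_of_hasDerivWithinAt_Ici_nonneg_of_lt hξ hξa (fun s _ hneg ↦ ?_) ht
  have reaction : 0 ≤ -(ξ s) * (u s) ^ 2 := mul_nonneg (neg_nonneg.2 hneg.le) (sq_nonneg _)
  have feed : 0 ≤ B * (1 - ξ s) := mul_nonneg hB (by linarith)
  exact add_nonneg reaction feed

theorem autocatalyst_nonneg (hr : 0 ≤ r)
    (hu : ∀ t ∈ Ici a, HasDerivWithinAt u (-r * u t + (u t) ^ 2 * ξ t) (Ici a) t)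
    (hξ : ∀ t ∈ Ici a, 0 ≤ ξ t) (hua : 0 ≤ u a) {t : ℝ} (ht : t ∈ Ici a) : 0 ≤ u t := by
  refine ge_of_hasDerivWithinAt_Ici_nonneg_of_lt hu hua (fun s hs hneg ↦ ?_) ht
  have removal : 0 ≤ -r * u s := mul_nonneg_of_nonpos_of_nonpos (neg_nonpos.2 hr) hneg.le
  have reaction : 0 ≤ (u s) ^ 2 * ξ s := mul_nonneg (sq_nonneg _) (hξ s hs)
  exact add_nonneg removal reaction

theorem autocatalyst_add_substrate_le (hB : 0 ≤ B) (hk : 0 ≤ k)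
    (hu : ∀ t ∈ Ici a, HasDerivWithinAt u (-(B + k) * u t + (u t) ^ 2 * ξ t) (Ici a) t)
    (hξ : ∀ t ∈ Ici a, HasDerivWithinAt ξ (-(ξ t) * (u t) ^ 2 + B * (1 - ξ t)) (Ici a) t)
    (hu_nonneg : ∀ t ∈ Ici a, 0 ≤ u t) (hM : 1 ≤ M) (ha : u a + ξ a ≤ M)
    {t : ℝ} (ht : t ∈ Ici a) : u t + ξ t ≤ M := by
  have sum_deriv : ∀ s ∈ Ici a, HasDerivWithinAt (fun x ↦ u x + ξ x)
      (B * (1 - (u s + ξ s)) - k * u s) (Ici a) s := fun s hs ↦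
    ((hu s hs).add (hξ s hs)).congr_deriv (by ring)
  refine le_of_hasDerivWithinAt_Ici_nonpos_of_lt sum_deriv ha (fun s hs hlt ↦ ?_) ht
  have relaxation : B * (1 - (u s + ξ s)) ≤ 0 :=
    mul_nonpos_of_nonneg_of_nonpos hB (by linarith)
  have removal : 0 ≤ k * u s := mul_nonneg hk (hu_nonneg s hs)
  linarith

end GrayScott

/-- Space-homogeneous (kinetic) Gray–Scott solutions are nonnegative, global and
uniformly bounded: `u(t) + ξ(t) ≤ max {u(0) + ξ(0), 1}`. -/
theorem stmt_2 (B k : ℝ) (hB : 0 < B) (hk : 0 < k)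
    (u ξ : ℝ → ℝ)
    (hu : ∀ t : ℝ, 0 ≤ t → HasDerivAt u (-(B + k) * u t + (u t) ^ 2 * ξ t) t)
    (hξ : ∀ t : ℝ, 0 ≤ t → HasDerivAt ξ (-(ξ t) * (u t) ^ 2 + B * (1 - ξ t)) t)
    (hu0 : 0 ≤ u 0) (hξ0 : 0 ≤ ξ 0) :
    ∀ t : ℝ, 0 ≤ t →
      0 ≤ u t ∧ 0 ≤ ξ t ∧ u t + ξ t ≤ max (u 0 + ξ 0) 1 := by
  have hu' := fun t ht ↦ (hu t ht).hasDerivWithinAt (s := Ici 0)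
  have hξ' := fun t ht ↦ (hξ t ht).hasDerivWithinAt (s := Ici 0)
  have ξ_nonneg : ∀ t ∈ Ici 0, 0 ≤ ξ t := fun _ ↦ GrayScott.substrate_nonneg hB.le hξ' hξ0
  have u_nonneg : ∀ t ∈ Ici 0, 0 ≤ u t := fun _ ↦
    GrayScott.autocatalyst_nonneg (add_pos hB hk).le hu' ξ_nonneg hu0
  exact fun t ht ↦ ⟨u_nonneg t ht, ξ_nonneg t ht,
    GrayScott.autocatalyst_add_substrate_le hB.le hk.le hu' hξ' u_nonneg
      (le_max_right _ _) (le_max_left _ _) ht⟩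
end

section
/- Let a, d, κ₀ > 0, let Ω ⊂ ℝⁿ be a bounded measurable set with |Ω| = 1, and let (u, ξ) be a nonnegative solution of the carcinogenesis shadow system on [0, ∞) with u(·,t) integrable for each t. Assume additionally that the total mass M(t) := ∫_Ω u(x,t) dx + a ξ(t) is differentiable in t with M'(t) = ∫_Ω u_t(x,t) dx + a ξ'(t). Then M'(t) ≤ -min{1, d} M(t) + a κ₀ for all t ≥ 0, and consequently ∫_Ω u(x,t) dx + a ξ(t) ≤ max{∫_Ω u₀(x) dx + a ξ₀, a κ₀ / min{1, d}} for all t ≥ 0; in particular sup_{t>0} ∫_Ω u(x,t) dx < ∞. -/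
open MeasureTheory

/-- A nonnegative solution of the carcinogenesis shadow system
`u_t = (auξ/(1+uξ) - d)u`, `ξ' = -ξ - ξ∫_Ω u² dx + κ₀` on `[0, ∞)`. -/
structure IsCarcSolution {n : ℕ} (a d κ₀ : ℝ) (Ω : Set (EuclideanSpace ℝ (Fin n)))
    (u : EuclideanSpace ℝ (Fin n) → ℝ → ℝ) (ξ : ℝ → ℝ) : Prop where
  nonneg_u : ∀ x ∈ Ω, ∀ t : ℝ, 0 ≤ t → 0 ≤ u x t
  nonneg_ξ : ∀ t : ℝ, 0 ≤ t → 0 ≤ ξ t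
  deriv_u : ∀ x ∈ Ω, ∀ t : ℝ, 0 ≤ t →
    HasDerivAt (u x) ((a * u x t * ξ t / (1 + u x t * ξ t) - d) * u x t) t
  deriv_ξ : ∀ t : ℝ, 0 ≤ t →
    HasDerivAt ξ (-ξ t - ξ t * (∫ x in Ω, (u x t) ^ 2) + κ₀) t
  int_sq : ∀ t : ℝ, 0 ≤ t → IntegrableOn (fun x => (u x t) ^ 2) Ω volume
  cont_ξ : ContinuousOn ξ (Set.Ici 0)

/-!
Dropping the denominator `1 + uξ ≥ 1` bounds the production of `∫ u` by `aξ ∫ u²`, which is exactly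
what `aξ` loses to consumption. The quadratic terms cancel in `M = ∫ u + aξ`, and what remains are
the linear losses, of rate at least `min 1 d`, and the supply `aκ₀`. Grönwall's inequality then
bounds `M(t)` by a convex combination of `M(0)` and `aκ₀ / min 1 d`.
-/

/-- The total mass `M(t) = ∫ u(x, t) dμ + a ξ(t)`, over an arbitrary measure `μ`, which is
Lebesgue measure restricted to `Ω` in the carcinogenesis model. -/
noncomputable def totalMass {α : Type*} [MeasurableSpace α] (μ : Measure α) (a : ℝ)
    (u : α → ℝ → ℝ) (ξ : ℝ → ℝ) (t : ℝ) : ℝ :=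
  (∫ x, u x t ∂μ) + a * ξ t

section LinearDecay

theorem gronwallBound_neg_le_max {m τ : ℝ} (hm : 0 < m) (hτ : 0 ≤ τ) (δ ε : ℝ) :
    gronwallBound δ (-m) ε τ ≤ max δ (ε / m) := by
  have hexp : 0 ≤ 1 - Real.exp (-m * τ) :=
    sub_nonneg.2 (Real.exp_le_one_iff.2 (mul_nonpos_of_nonpos_of_nonneg (neg_nonpos.2 hm.le) hτ))
  calc gronwallBound δ (-m) ε τ
      = δ * Real.exp (-m * τ) + ε / m * (1 - Real.exp (-m * τ)) := by
        rw [gronwallBound_of_K_ne_0 (neg_ne_zero.2 hm.ne'), div_neg]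
        ring
    _ ≤ max δ (ε / m) * Real.exp (-m * τ) + max δ (ε / m) * (1 - Real.exp (-m * τ)) := by
        gcongr
        · exact le_max_left _ _
        · exact le_max_right _ _
    _ = max δ (ε / m) := by ring

theorem le_max_of_deriv_right_le_neg_mul_add {f f' : ℝ → ℝ} {m b t₀ t₁ : ℝ} (hm : 0 < m)
    (hf : ContinuousOn f (Set.Icc t₀ t₁))
    (hf' : ∀ t ∈ Set.Ico t₀ t₁, HasDerivWithinAt f (f' t) (Set.Ici t) t)
    (hdecay : ∀ t ∈ Set.Ico t₀ t₁, f' t ≤ -m * f t + b) {t : ℝ} (ht : t ∈ Set.Icc t₀ t₁) :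
    f t ≤ max (f t₀) (b / m) :=
  (le_gronwallBound_of_liminf_deriv_right_le hf
    (fun s hs _ hr => (hf' s hs).liminf_right_slope_le hr) le_rfl hdecay t ht).trans
    (gronwallBound_neg_le_max hm (sub_nonneg.2 ht.1) _ _)

end LinearDecay

section SaturatingGrowth

variable {a s : ℝ}

theorem saturating_growth_le {v : ℝ} (ha : 0 ≤ a) (hs : 0 ≤ s) (hv : 0 ≤ v) :
    a * v * s / (1 + v * s) * v ≤ a * s * v ^ 2 :=
  calc a * v * s / (1 + v * s) * v
      ≤ a * v * s * v := by
        gcongr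
        exact div_le_self (by positivity) (le_add_of_nonneg_right (by positivity))
    _ = a * s * v ^ 2 := by ring

variable {α : Type*} [MeasurableSpace α] {μ : Measure α} {v : α → ℝ}

theorem integrable_saturating_growth (ha : 0 ≤ a) (hs : 0 ≤ s) (hv : 0 ≤ᵐ[μ] v)
    (hv_meas : AEStronglyMeasurable v μ) (hv_sq : Integrable (fun x => v x ^ 2) μ) :
    Integrable (fun x => a * v x * s / (1 + v x * s) * v x) μ := by
  have hv_aemeas : AEMeasurable v μ := hv_meas.aemeasurable
  refine (hv_sq.const_mul (a * s)).mono' (AEMeasurable.aestronglyMeasurable (by fun_prop)) ?_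
  filter_upwards [hv] with x (hx : 0 ≤ v x)
  rw [Real.norm_of_nonneg (by positivity)]
  exact saturating_growth_le ha hs hx

theorem integral_reaction_le (ha : 0 ≤ a) (hs : 0 ≤ s) (d : ℝ) (hv : 0 ≤ᵐ[μ] v)
    (hv_int : Integrable v μ) (hv_sq : Integrable (fun x => v x ^ 2) μ) :
    ∫ x, (a * v x * s / (1 + v x * s) - d) * v x ∂μ ≤
      a * s * (∫ x, v x ^ 2 ∂μ) - d * ∫ x, v x ∂μ := by
  have hgrowth := integrable_saturating_growth ha hs hv hv_int.aestronglyMeasurable hv_sq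
  calc ∫ x, (a * v x * s / (1 + v x * s) - d) * v x ∂μ
      = (∫ x, a * v x * s / (1 + v x * s) * v x ∂μ) - d * ∫ x, v x ∂μ := by
        simp_rw [sub_mul]
        rw [integral_sub hgrowth (hv_int.const_mul d), integral_const_mul]
    _ ≤ (∫ x, a * s * v x ^ 2 ∂μ) - d * ∫ x, v x ∂μ := by
        gcongr ?_ - _
        exact integral_mono_ae hgrowth (hv_sq.const_mul (a * s))
          (hv.mono fun _ hx => saturating_growth_le ha hs hx)
    _ = a * s * (∫ x, v x ^ 2 ∂μ) - d * ∫ x, v x ∂μ := by rw [integral_const_mul]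

end SaturatingGrowth

section MassBalance

variable {α : Type*} [MeasurableSpace α] {μ : Measure α} {a d κ₀ : ℝ}
  {u : α → ℝ → ℝ} {ξ : ℝ → ℝ}

theorem totalMass_rate_le {t : ℝ} (ha : 0 ≤ a) (hu : 0 ≤ᵐ[μ] fun x => u x t)
    (hξ : 0 ≤ ξ t) (hu_int : Integrable (fun x => u x t) μ)
    (hu_sq : Integrable (fun x => u x t ^ 2) μ) :
    (∫ x, (a * u x t * ξ t / (1 + u x t * ξ t) - d) * u x t ∂μ) +
        a * (-ξ t - ξ t * (∫ x, u x t ^ 2 ∂μ) + κ₀) ≤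
      -(min 1 d) * totalMass μ a u ξ t + a * κ₀ := by
  have hreaction := integral_reaction_le ha hξ d hu hu_int hu_sq
  have hu_decay : min 1 d * ∫ x, u x t ∂μ ≤ d * ∫ x, u x t ∂μ :=
    mul_le_mul_of_nonneg_right (min_le_right 1 d) (integral_nonneg_of_ae hu)
  have hξ_decay : min 1 d * (a * ξ t) ≤ 1 * (a * ξ t) :=
    mul_le_mul_of_nonneg_right (min_le_left 1 d) (mul_nonneg ha hξ)
  unfold totalMass
  linarith

theorem stmt_12_general (ha : 0 ≤ a) (hd : 0 < d)
    (hu : ∀ t : ℝ, 0 ≤ t → 0 ≤ᵐ[μ] fun x => u x t) (hξ : ∀ t : ℝ, 0 ≤ t → 0 ≤ ξ t)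
    (hu_int : ∀ t : ℝ, 0 ≤ t → Integrable (fun x => u x t) μ)
    (hu_sq : ∀ t : ℝ, 0 ≤ t → Integrable (fun x => u x t ^ 2) μ)
    (hM : ∀ t : ℝ, 0 ≤ t →
      HasDerivAt (totalMass μ a u ξ)
        ((∫ x, (a * u x t * ξ t / (1 + u x t * ξ t) - d) * u x t ∂μ) +
          a * (-ξ t - ξ t * (∫ x, u x t ^ 2 ∂μ) + κ₀)) t) :
    (∀ t : ℝ, 0 ≤ t →
      deriv (totalMass μ a u ξ) t ≤ -(min 1 d) * totalMass μ a u ξ t + a * κ₀) ∧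
    (∀ t : ℝ, 0 ≤ t →
      totalMass μ a u ξ t ≤ max (totalMass μ a u ξ 0) (a * κ₀ / min 1 d)) ∧
    (∃ C : ℝ, ∀ t : ℝ, 0 < t → (∫ x, u x t ∂μ) ≤ C) := by
  have hdecay (t : ℝ) (ht : 0 ≤ t) :
      deriv (totalMass μ a u ξ) t ≤ -(min 1 d) * totalMass μ a u ξ t + a * κ₀ :=
    (hM t ht).deriv.trans_le
      (totalMass_rate_le ha (hu t ht) (hξ t ht) (hu_int t ht) (hu_sq t ht))
  have hbound (t : ℝ) (ht : 0 ≤ t) :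
      totalMass μ a u ξ t ≤ max (totalMass μ a u ξ 0) (a * κ₀ / min 1 d) :=
    le_max_of_deriv_right_le_neg_mul_add (lt_min one_pos hd)
      (fun s hs => (hM s hs.1).continuousAt.continuousWithinAt)
      (fun s hs => (hM s hs.1).differentiableAt.hasDerivAt.hasDerivWithinAt)
      (fun s hs => hdecay s hs.1) (Set.right_mem_Icc.2 ht)
  exact ⟨hdecay, hbound, max (totalMass μ a u ξ 0) (a * κ₀ / min 1 d), fun t ht =>
    (le_add_of_nonneg_right (mul_nonneg ha (hξ t ht.le))).trans (hbound t ht.le)⟩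

end MassBalance

/-- Boundedness of the total mass `M(t) = ∫_Ω u dx + aξ` for the carcinogenesis
shadow system. -/
theorem stmt_12 {n : ℕ} (a d κ₀ : ℝ) (ha : 0 < a) (hd : 0 < d) (hκ₀ : 0 < κ₀)
    (Ω : Set (EuclideanSpace ℝ (Fin n)))
    (hΩbdd : Bornology.IsBounded Ω) (hΩmeas : MeasurableSet Ω)
    (hΩvol : volume Ω = 1)
    (u : EuclideanSpace ℝ (Fin n) → ℝ → ℝ) (ξ : ℝ → ℝ)
    (hsol : IsCarcSolution a d κ₀ Ω u ξ)
    (hint_u : ∀ t : ℝ, 0 ≤ t → IntegrableOn (fun x => u x t) Ω volume)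
    (M : ℝ → ℝ) (hMdef : M = fun t => (∫ x in Ω, u x t) + a * ξ t)
    (hMderiv : ∀ t : ℝ, 0 ≤ t →
      HasDerivAt M
        ((∫ x in Ω, (a * u x t * ξ t / (1 + u x t * ξ t) - d) * u x t) +
          a * (-ξ t - ξ t * (∫ x in Ω, (u x t) ^ 2) + κ₀)) t) :
    (∀ t : ℝ, 0 ≤ t → deriv M t ≤ -(min 1 d) * M t + a * κ₀) ∧
    (∀ t : ℝ, 0 ≤ t →
      (∫ x in Ω, u x t) + a * ξ t ≤
        max ((∫ x in Ω, u x 0) + a * ξ 0) (a * κ₀ / min 1 d)) ∧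
    (∃ C : ℝ, ∀ t : ℝ, 0 < t → (∫ x in Ω, u x t) ≤ C) := by
  subst hMdef
  exact stmt_12_general ha.le hd
    (fun t ht => ae_restrict_of_forall_mem hΩmeas fun x hx => hsol.nonneg_u x hx t ht)
    hsol.nonneg_ξ hint_u hsol.int_sq hMderiv
end

section
/- Let a, d, κ₀ > 0 satisfy 2(a - d) ≥ 1 and κ₀ ≥ 4a, and let λ satisfy 1/2 ≤ λ ≤ 1 - 2a/κ₀. Let Ω ⊂ ℝⁿ be a bounded measurable set with |Ω| = 1, and let (u, ξ) be a nonnegative solution of the carcinogenesis shadow system on [0, ∞) with u(·,0) = u₀ and ξ(0) = ξ₀, where ξ(t) > 0 for all t ≥ 0. Assume additionally that t ↦ ∫_Ω u(x,t)² dx is differentiable with derivative ∫_Ω 2 u(x,t) u_t(x,t) dx. If ξ₀ ∫_Ω u₀(x)² dx > λ κ₀ and 0 < ξ₀ ≤ (1 - λ) κ₀, then for all t ≥ 0: ξ(t) ∫_Ω u(x,t)² dx > λ κ₀ and 0 < ξ(t) ≤ (1 - λ) κ₀. -/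
open MeasureTheory

/-!
Put `I = ∫ u²` and `y = ξ I`. While `y ≥ λκ₀`, the equation for `ξ` reads `ξ' ≤ (1 - λ)κ₀ - ξ`, so
`ξ` stays below `(1 - λ)κ₀`. Hence, if `y` reached the level `λκ₀` at a first time, then
`ξ ≤ (1 - λ)κ₀ ≤ λκ₀ = ξ I` would give `I ≥ 1` there. Since `2 u (uξ / (1 + uξ)) < u² + 1`, the
reaction satisfies `ξ I' > 2(a - d) y - a (I + 1) ≥ y - a (I + 1)`, and therefore
`y' > (κ₀ - λκ₀) I - a (I + 1) ≥ a (I - 1) ≥ 0`, which is impossible at a first crossing from above.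
-/

open Set Filter Topology

theorem exists_first_hit {f : ℝ → ℝ} {a b c : ℝ} (hf : ContinuousOn f (Icc a b)) (hab : a ≤ b)
    (hfa : c < f a) (hfb : f b ≤ c) :
    ∃ s ∈ Ioc a b, f s = c ∧ ∀ r ∈ Ico a s, c < f r := by
  have exists_hit : ∀ t ∈ Icc a b, f t ≤ c → ∃ r ∈ Icc a t, f r = c := fun t ht hft =>
    intermediate_value_Icc' ht.1 (hf.mono (Icc_subset_Icc_right ht.2)) ⟨hft, hfa.le⟩
  have hclosed : IsClosed (Icc a b ∩ f ⁻¹' {c}) :=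
    hf.preimage_isClosed_of_isClosed isClosed_Icc isClosed_singleton
  obtain ⟨s, ⟨hs, hfs⟩, hleast⟩ :=
    (isCompact_Icc.of_isClosed_subset hclosed inter_subset_left).exists_isLeast
      (exists_hit b (right_mem_Icc.2 hab) hfb)
  have has : a < s := hs.1.lt_of_ne fun h => hfa.ne' (h ▸ hfs)
  refine ⟨s, ⟨has, hs.2⟩, hfs, fun r hr => ?_⟩
  have hrb : r ≤ b := hr.2.le.trans hs.2
  by_contra! hfr
  obtain ⟨q, hq, hfq⟩ := exists_hit r ⟨hr.1, hrb⟩ hfr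
  exact (hq.2.trans_lt hr.2).not_ge (hleast ⟨⟨hq.1, hq.2.trans hrb⟩, hfq⟩)

theorem hasDerivWithinAt_nonpos_of_isLocalMinOn_right {f : ℝ → ℝ} {a s f' : ℝ} (has : a < s)
    (hf : HasDerivWithinAt f f' (Icc a s) s) (hmin : IsLocalMinOn f (Icc a s) s) : f' ≤ 0 := by
  have hcone : a - s ∈ posTangentConeAt (Icc a s) s :=
    sub_mem_posTangentConeAt_of_segment_subset (by rw [segment_symm, segment_eq_Icc has.le])
  have hslope : 0 ≤ (a - s) * f' := by
    simpa using hmin.hasFDerivWithinAt_nonneg hf.hasFDerivWithinAt hcone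
  exact nonpos_of_mul_nonneg_right hslope (sub_neg.2 has)

theorem lt_of_deriv_pos_at_first_hit {f f' : ℝ → ℝ} {a b c : ℝ} (hab : a ≤ b)
    (hf : ∀ t ∈ Icc a b, HasDerivWithinAt f (f' t) (Icc a b) t) (hfa : c < f a)
    (hpos : ∀ s ∈ Ioc a b, f s = c → (∀ r ∈ Ico a s, c < f r) → 0 < f' s) : c < f b := by
  by_contra! hfb
  obtain ⟨s, hs, hfs, hbefore⟩ :=
    exists_first_hit (fun t ht => (hf t ht).continuousWithinAt) hab hfa hfb
  have hmin : IsMinOn f (Icc a s) s := isMinOn_iff.2 fun r hr => by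
    rcases hr.2.eq_or_lt with rfl | hrs
    · exact le_rfl
    · exact hfs.le.trans (hbefore r ⟨hr.1, hrs⟩).le
  have hderiv : HasDerivWithinAt f (f' s) (Icc a s) s :=
    (hf s (Ioc_subset_Icc_self hs)).mono (Icc_subset_Icc_right hs.2)
  exact (hpos s hs hfs hbefore).not_ge
    (hasDerivWithinAt_nonpos_of_isLocalMinOn_right hs.1 hderiv hmin.localize)

theorem le_of_deriv_le_sub_self {f f' : ℝ → ℝ} {a b M : ℝ} (hab : a ≤ b)
    (hf : ∀ t ∈ Icc a b, HasDerivWithinAt f (f' t) (Icc a b) t)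
    (hf' : ∀ t ∈ Ico a b, f' t ≤ M - f t) (hfa : f a ≤ M) : f b ≤ M := by
  have hcont : ContinuousOn f (Icc a b) := fun t ht => (hf t ht).continuousWithinAt
  have hslope : ∀ t ∈ Ico a b, ∀ r, f' t < r → ∃ᶠ z in 𝓝[>] t, (z - t)⁻¹ * (f z - f t) < r :=
    fun t ht r hr => ((hf t (Ico_subset_Icc_self ht)).mono_of_mem_nhdsWithin
      (Icc_mem_nhdsGE_of_mem ht)).liminf_right_slope_le hr
  have hgronwall := le_gronwallBound_of_liminf_deriv_right_le (K := -1) (ε := M) hcont hslope hfa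
    (fun t ht => by linarith [hf' t ht]) b (right_mem_Icc.2 hab)
  have hconst : gronwallBound M (-1) M (b - a) = M := by
    rw [gronwallBound_of_K_ne_0 (by norm_num)]
    ring
  exact hgronwall.trans_eq hconst

section Integral

variable {α : Type*} [MeasurableSpace α] {μ : Measure α}

theorem integral_lt_integral_of_ae_lt [NeZero μ] {f g : α → ℝ} (hf : Integrable f μ)
    (hg : Integrable g μ) (hfg : ∀ᵐ x ∂μ, f x < g x) : ∫ x, f x ∂μ < ∫ x, g x ∂μ := by
  have hle : f ≤ᵐ[μ] g := hfg.mono fun _ hx => hx.le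
  refine (integral_mono_ae hf hg hle).lt_of_ne fun heq => ?_
  obtain ⟨x, hx, hx'⟩ := (((integral_eq_iff_of_ae_le hf hg hle).1 heq).and hfg).exists
  exact hx'.ne hx

theorem aemeasurable_of_aemeasurable_sq {v : α → ℝ} (hv : ∀ᵐ x ∂μ, 0 ≤ v x)
    (hsq : AEMeasurable (fun x => v x ^ 2) μ) : AEMeasurable v μ :=
  hsq.sqrt.congr (hv.mono fun _ hx => Real.sqrt_sq hx)

end Integral

/-- The right-hand side `(a r z / (1 + r z) - d) r` of the equation for `u`, as a function of the
values `r` of `u` and `z` of `ξ`. -/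
noncomputable def carcReaction (a d z r : ℝ) : ℝ :=
  (a * r * z / (1 + r * z) - d) * r

section Reaction

variable {a d z : ℝ}

theorem carcReaction_eq {r : ℝ} (hr : 0 ≤ r) (hz : 0 ≤ z) :
    carcReaction a d z r = (a - d - a / (1 + r * z)) * r := by
  have : 1 + r * z ≠ 0 := by positivity
  unfold carcReaction
  field_simp
  ring

theorem lt_mul_two_mul_carcReaction {r : ℝ} (ha : 0 < a) (hz : 0 ≤ z) (hr : 0 ≤ r) :
    2 * (a - d) * z * r ^ 2 - a * (r ^ 2 + 1) < z * (2 * r * carcReaction a d z r) := by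
  set θ := r * z / (1 + r * z)
  have hθ : θ < 1 := (div_lt_one (by positivity)).2 (by linarith)
  have hsaturated : 2 * r * θ < r ^ 2 + 1 := by
    rcases hr.eq_or_lt with rfl | hr
    · norm_num
    · calc 2 * r * θ < 2 * r * 1 := by gcongr
        _ ≤ r ^ 2 + 1 ^ 2 := two_mul_le_add_sq r 1
        _ = r ^ 2 + 1 := by rw [one_pow]
  have hsplit : z * (2 * r * carcReaction a d z r) =
      2 * (a - d) * z * r ^ 2 - a * (2 * r * θ) := by
    rw [carcReaction_eq hr hz]
    ring
  rw [hsplit]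
  gcongr

theorem abs_carcReaction_le {r : ℝ} (hz : 0 ≤ z) (hr : 0 ≤ r) :
    |carcReaction a d z r| ≤ (|a| + |d|) * r := by
  have hθ : |r * z / (1 + r * z)| ≤ 1 := by
    rw [abs_of_nonneg (by positivity)]
    exact div_le_one_of_le₀ (by linarith) (by positivity)
  calc |carcReaction a d z r| = |a * (r * z / (1 + r * z)) - d| * r := by
        rw [carcReaction, abs_mul, abs_of_nonneg hr, mul_assoc, mul_div_assoc]
    _ ≤ (|a * (r * z / (1 + r * z))| + |d|) * r := by gcongr; exact abs_sub _ _
    _ ≤ (|a| + |d|) * r := by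
        rw [abs_mul]
        gcongr
        exact mul_le_of_le_one_right (abs_nonneg a) hθ

variable {α : Type*} [MeasurableSpace α] {μ : Measure α} {v : α → ℝ}

theorem integrable_mul_carcReaction (hz : 0 ≤ z) (hv : ∀ᵐ x ∂μ, 0 ≤ v x)
    (hsq : Integrable (fun x => v x ^ 2) μ) :
    Integrable (fun x => 2 * v x * carcReaction a d z (v x)) μ := by
  have hmeas : AEMeasurable v μ := aemeasurable_of_aemeasurable_sq hv hsq.aemeasurable
  refine (hsq.const_mul (2 * (|a| + |d|))).mono' ?_ ?_
  · unfold carcReaction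
    exact AEMeasurable.aestronglyMeasurable (by fun_prop)
  · filter_upwards [hv] with x hx
    calc ‖2 * v x * carcReaction a d z (v x)‖ = 2 * v x * |carcReaction a d z (v x)| := by
          rw [Real.norm_eq_abs, abs_mul, abs_of_nonneg (by positivity)]
      _ ≤ 2 * v x * ((|a| + |d|) * v x) := by gcongr; exact abs_carcReaction_le hz hx
      _ = 2 * (|a| + |d|) * v x ^ 2 := by ring

theorem lt_mul_integral_two_mul_carcReaction [IsFiniteMeasure μ] [NeZero μ] (ha : 0 < a)
    (hz : 0 ≤ z) (hv : ∀ᵐ x ∂μ, 0 ≤ v x) (hsq : Integrable (fun x => v x ^ 2) μ) :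
    2 * (a - d) * (z * ∫ x, v x ^ 2 ∂μ) - a * ((∫ x, v x ^ 2 ∂μ) + μ.real univ) <
      z * ∫ x, 2 * v x * carcReaction a d z (v x) ∂μ := by
  have hsq_one : Integrable (fun x => v x ^ 2 + 1) μ := hsq.add (integrable_const 1)
  calc 2 * (a - d) * (z * ∫ x, v x ^ 2 ∂μ) - a * ((∫ x, v x ^ 2 ∂μ) + μ.real univ)
      = ∫ x, (2 * (a - d) * z * v x ^ 2 - a * (v x ^ 2 + 1)) ∂μ := by
        rw [integral_sub (hsq.const_mul _) (hsq_one.const_mul a), integral_const_mul,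
          integral_const_mul, integral_add hsq (integrable_const 1), integral_const,
          smul_eq_mul, mul_one, mul_assoc _ z]
    _ < ∫ x, z * (2 * v x * carcReaction a d z (v x)) ∂μ :=
        integral_lt_integral_of_ae_lt ((hsq.const_mul _).sub (hsq_one.const_mul a))
          ((integrable_mul_carcReaction hz hv hsq).const_mul z)
          (hv.mono fun _ hx => lt_mul_two_mul_carcReaction ha hz hx)
    _ = z * ∫ x, 2 * v x * carcReaction a d z (v x) ∂μ := integral_const_mul _ _

end Reaction

section Dynamics

variable {a d κ₀ lam : ℝ}

theorem le_one_sub_mul_of_forall_le_mul {ξ I : ℝ → ℝ} {s : ℝ} (hs : 0 ≤ s)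
    (hξ : ∀ t, 0 ≤ t → HasDerivWithinAt ξ (-ξ t - ξ t * I t + κ₀) (Ici 0) t)
    (h₀ : ξ 0 ≤ (1 - lam) * κ₀) (hI : ∀ t ∈ Ico 0 s, lam * κ₀ ≤ ξ t * I t) :
    ξ s ≤ (1 - lam) * κ₀ :=
  le_of_deriv_le_sub_self hs (fun t ht => (hξ t ht.1).mono Icc_subset_Ici_self)
    (fun t ht => by linarith [hI t ht]) h₀

/-- Here `z`, `I`, `m` and `J` are the values of `ξ`, `∫ u²`, the measure of the domain and the time
derivative of `∫ u²` at a time when `ξ ∫ u²` hits the level `lam * κ₀`. -/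
theorem deriv_mul_pos_of_mul_eq {z I m J : ℝ} (ha : 0 < a) (hκ₀ : 0 < κ₀)
    (had : 1 ≤ 2 * (a - d)) (hlam : 1 / 2 ≤ lam) (haκ : 2 * a ≤ (1 - lam) * κ₀) (hm : m ≤ 1)
    (hz : 0 < z) (hzle : z ≤ (1 - lam) * κ₀) (hzI : z * I = lam * κ₀)
    (hJ : 2 * (a - d) * (z * I) - a * (I + m) < z * J) :
    0 < (-z - z * I + κ₀) * I + z * J := by
  have hface : (1 - lam) * κ₀ ≤ lam * κ₀ := by
    gcongr
    linarith
  have hI : 1 ≤ I := by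
    refine le_of_mul_le_mul_left ?_ hz
    linarith
  have hgrowth : z * I ≤ 2 * (a - d) * (z * I) := le_mul_of_one_le_left (by positivity) had
  calc 0 ≤ a * (I - m) := mul_nonneg ha.le (by linarith)
    _ = 2 * a * I - a * (I + m) := by ring
    _ ≤ (1 - lam) * κ₀ * I - a * (I + m) := by gcongr
    _ = (-z - z * I + κ₀) * I + (z * I - a * (I + m)) := by linear_combination I * hzI
    _ < (-z - z * I + κ₀) * I + z * J := by linarith

theorem stmt_14_general {α : Type*} [MeasurableSpace α] {μ : Measure α} [IsFiniteMeasure μ]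
    (hμ : μ.real univ ≤ 1) (ha : 0 < a) (hκ₀ : 0 < κ₀) (had : 1 ≤ 2 * (a - d))
    (hlam : 1 / 2 ≤ lam) (haκ : 2 * a ≤ (1 - lam) * κ₀) {u : α → ℝ → ℝ} {ξ : ℝ → ℝ}
    (hu : ∀ t, 0 ≤ t → ∀ᵐ x ∂μ, 0 ≤ u x t)
    (hsq : ∀ t, 0 ≤ t → Integrable (fun x => u x t ^ 2) μ)
    (hξ : ∀ t, 0 ≤ t →
      HasDerivWithinAt ξ (-ξ t - ξ t * (∫ x, u x t ^ 2 ∂μ) + κ₀) (Ici 0) t)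
    (hI : ∀ t, 0 ≤ t → HasDerivWithinAt (fun s => ∫ x, u x s ^ 2 ∂μ)
      (∫ x, 2 * u x t * carcReaction a d (ξ t) (u x t) ∂μ) (Ici 0) t)
    (hy₀ : lam * κ₀ < ξ 0 * ∫ x, u x 0 ^ 2 ∂μ) (hξ₀ : ξ 0 ≤ (1 - lam) * κ₀) {t : ℝ} (ht : 0 ≤ t) :
    lam * κ₀ < ξ t * (∫ x, u x t ^ 2 ∂μ) ∧ 0 < ξ t ∧ ξ t ≤ (1 - lam) * κ₀ := by
  have hlevel : 0 < lam * κ₀ := by positivity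
  have : NeZero μ := ⟨by
    rintro rfl
    rw [integral_zero_measure, mul_zero] at hy₀
    exact hlevel.not_gt hy₀⟩
  have hξ_pos : ∀ s, 0 < ξ s * ∫ x, u x s ^ 2 ∂μ → 0 < ξ s := fun s hs =>
    pos_of_mul_pos_left hs (integral_nonneg fun x => sq_nonneg (u x s))
  have hy : ∀ s, 0 ≤ s → lam * κ₀ < ξ s * ∫ x, u x s ^ 2 ∂μ := fun s hs => by
    refine lt_of_deriv_pos_at_first_hit (f := fun r => ξ r * ∫ x, u x r ^ 2 ∂μ) hs
      (fun r hr => ((hξ r hr.1).mul (hI r hr.1)).mono Icc_subset_Ici_self) hy₀ ?_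
    intro r ⟨hr₀, _⟩ hyr hbefore
    have hξr : 0 < ξ r := hξ_pos r (hlevel.trans_eq hyr.symm)
    exact deriv_mul_pos_of_mul_eq ha hκ₀ had hlam haκ hμ hξr
      (le_one_sub_mul_of_forall_le_mul hr₀.le hξ hξ₀ fun q hq => (hbefore q hq).le) hyr
      (lt_mul_integral_two_mul_carcReaction ha hξr.le (hu r hr₀.le) (hsq r hr₀.le))
  exact ⟨hy t ht, hξ_pos t (hlevel.trans (hy t ht)),
    le_one_sub_mul_of_forall_le_mul ht hξ hξ₀ fun s hs => (hy s hs.1).le⟩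

end Dynamics

/-- The invariant region `ξ∫_Ω u² dx > λκ₀`, `0 < ξ ≤ (1-λ)κ₀` is preserved by
the flow of the carcinogenesis shadow system. -/
theorem stmt_14 {n : ℕ} (a d κ₀ lam : ℝ) (ha : 0 < a) (hd : 0 < d) (hκ₀ : 0 < κ₀)
    (had : 1 ≤ 2 * (a - d)) (hκa : 4 * a ≤ κ₀)
    (hlam₁ : 1 / 2 ≤ lam) (hlam₂ : lam ≤ 1 - 2 * a / κ₀)
    (Ω : Set (EuclideanSpace ℝ (Fin n)))
    (hΩbdd : Bornology.IsBounded Ω) (hΩmeas : MeasurableSet Ω)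
    (hΩvol : volume Ω = 1)
    (u : EuclideanSpace ℝ (Fin n) → ℝ → ℝ) (ξ : ℝ → ℝ)
    (hsol : IsCarcSolution a d κ₀ Ω u ξ)
    (hξpos : ∀ t : ℝ, 0 ≤ t → 0 < ξ t)
    (hint_u : ∀ t : ℝ, 0 ≤ t → IntegrableOn (fun x => u x t) Ω volume)
    (hL2deriv : ∀ t : ℝ, 0 ≤ t →
      HasDerivAt (fun s => ∫ x in Ω, (u x s) ^ 2)
        (∫ x in Ω, 2 * u x t * ((a * u x t * ξ t / (1 + u x t * ξ t) - d) * u x t)) t)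
    (u₀ : EuclideanSpace ℝ (Fin n) → ℝ) (hu0 : ∀ x ∈ Ω, u x 0 = u₀ x)
    (ξ₀ : ℝ) (hξ0 : ξ 0 = ξ₀)
    (hini₁ : lam * κ₀ < ξ₀ * ∫ x in Ω, (u₀ x) ^ 2)
    (hini₂ : 0 < ξ₀ ∧ ξ₀ ≤ (1 - lam) * κ₀) :
    ∀ t : ℝ, 0 ≤ t →
      lam * κ₀ < ξ t * ∫ x in Ω, (u x t) ^ 2 ∧
      0 < ξ t ∧ ξ t ≤ (1 - lam) * κ₀ := by
  have hfinite : IsFiniteMeasure (volume.restrict Ω) := ⟨by simp [hΩvol]⟩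
  have hinitial : ∫ x in Ω, u x 0 ^ 2 = ∫ x in Ω, u₀ x ^ 2 :=
    setIntegral_congr_fun hΩmeas fun x hx => by simp only [hu0 x hx]
  have haκ : 2 * a ≤ (1 - lam) * κ₀ := (div_le_iff₀ hκ₀).1 (by linarith)
  subst hξ0
  intro t ht
  exact stmt_14_general (by simp [Measure.real, hΩvol]) ha hκ₀ had hlam₁ haκ
    (fun s hs => ae_restrict_of_forall_mem hΩmeas fun x hx => hsol.nonneg_u x hx s hs)
    hsol.int_sq (fun s hs => (hsol.deriv_ξ s hs).hasDerivWithinAt)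
    (fun s hs => (hL2deriv s hs).hasDerivWithinAt) (hinitial ▸ hini₁) hini₂.2 ht
end

section
/- Let a, d > 0, T ∈ (0, ∞], and let ξ : [0, T) → [0, ∞) be continuous. Suppose u₁, u₂ : [0, T) → (0, ∞) are differentiable and each solves the equation u'(t) = (a u(t)ξ(t)/(1 + u(t)ξ(t)) - d) u(t) on [0, T). If u₁(0) ≤ u₂(0), then u₁(t)/u₂(t) ≤ u₁(0)/u₂(0) for all t ∈ [0, T); in particular u₁(t) ≤ u₂(t) for all t, and if u₁(0) < u₂(0) then u₁(t) < u₂(t) for all t ∈ [0, T). Moreover, the ratio w(t) = u₁(t)/u₂(t) satisfies w'(t) = -a w(t) · u₂(t)ξ(t)(1 - w(t)) / ((1 + u₁(t)ξ(t))(1 + u₂(t)ξ(t))). -/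
open scoped ENNReal

/-!
The logarithmic derivatives of `u₁` and `u₂` differ by the difference of the saturating terms, so
the decay rate `d` cancels in `w = u₁ / u₂`, and `z = 1 - w` solves a linear equation `z' = k z`
with `k = a u₁ ξ / ((1 + u₁ ξ) (1 + u₂ ξ))`. This coefficient lies in `[0, a]` whatever the size of
`ξ`, so a solution that vanishes once vanishes identically and, by the intermediate value theorem,
`z` keeps its sign. Finally `w' = -k z ≤ 0`.
-/

open Set

section LinearODE

variable {k : ℝ → ℝ} {K t₀ t₁ : ℝ}

theorem eq_zero_iff_of_hasDerivWithinAt_smul {E : Type*} [NormedAddCommGroup E]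
    [NormedSpace ℝ E] {z : ℝ → E} (ht : t₀ ≤ t₁)
    (hz : ∀ t ∈ Icc t₀ t₁, HasDerivWithinAt z (k t • z t) (Icc t₀ t₁) t)
    (hk : ∀ t ∈ Icc t₀ t₁, ‖k t‖ ≤ K) : z t₀ = 0 ↔ z t₁ = 0 := by
  have hlip : ∀ t ∈ Icc t₀ t₁, LipschitzOnWith K.toNNReal (k t • · : E → E) univ := fun t htI ↦
    ((lipschitzWith_smul (k t)).weaken
      (NNReal.coe_le_coe.1 ((hk t htI).trans K.le_coe_toNNReal))).lipschitzOnWith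
  have hcont : ContinuousOn z (Icc t₀ t₁) := HasDerivWithinAt.continuousOn hz
  have hzero : ∀ t s, HasDerivWithinAt (fun _ ↦ (0 : E)) (k t • 0) s t := fun t s ↦ by
    simpa only [smul_zero] using hasDerivWithinAt_const t s (0 : E)
  constructor <;> intro h
  · exact ODE_solution_unique_of_mem_Icc_right (s := fun _ ↦ univ)
      (fun t ht ↦ hlip t (Ico_subset_Icc_self ht)) hcont
      (fun t ht ↦ (hz t (Ico_subset_Icc_self ht)).mono_of_mem_nhdsWithin
        (Icc_mem_nhdsGE_of_mem ht))
      (fun _ _ ↦ mem_univ _) continuousOn_const (fun t _ ↦ hzero t _) (fun _ _ ↦ mem_univ _) h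
      (right_mem_Icc.2 ht)
  · exact ODE_solution_unique_of_mem_Icc_left (s := fun _ ↦ univ)
      (fun t ht ↦ hlip t (Ioc_subset_Icc_self ht)) hcont
      (fun t ht ↦ (hz t (Ioc_subset_Icc_self ht)).mono_of_mem_nhdsWithin
        (Icc_mem_nhdsLE_of_mem ht))
      (fun _ _ ↦ mem_univ _) continuousOn_const (fun t _ ↦ hzero t _) (fun _ _ ↦ mem_univ _) h
      (left_mem_Icc.2 ht)

variable {z : ℝ → ℝ}

theorem nonneg_of_hasDerivWithinAt_mul (ht : t₀ ≤ t₁)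
    (hz : ∀ t ∈ Icc t₀ t₁, HasDerivWithinAt z (k t * z t) (Icc t₀ t₁) t)
    (hk : ∀ t ∈ Icc t₀ t₁, ‖k t‖ ≤ K) (h₀ : 0 ≤ z t₀) : 0 ≤ z t₁ := by
  by_contra! hneg
  obtain ⟨s, hs, hzs⟩ :=
    intermediate_value_Icc' ht (HasDerivWithinAt.continuousOn hz) ⟨hneg.le, h₀⟩
  have hsub : Icc s t₁ ⊆ Icc t₀ t₁ := Icc_subset_Icc_left hs.1
  exact hneg.ne <| (eq_zero_iff_of_hasDerivWithinAt_smul hs.2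
    (fun t ht ↦ (hz t (hsub ht)).mono hsub) (fun t ht ↦ hk t (hsub ht))).1 hzs

theorem pos_of_hasDerivWithinAt_mul (ht : t₀ ≤ t₁)
    (hz : ∀ t ∈ Icc t₀ t₁, HasDerivWithinAt z (k t * z t) (Icc t₀ t₁) t)
    (hk : ∀ t ∈ Icc t₀ t₁, ‖k t‖ ≤ K) (h₀ : 0 < z t₀) : 0 < z t₁ :=
  (nonneg_of_hasDerivWithinAt_mul ht hz hk h₀.le).lt_of_ne' fun h ↦
    h₀.ne' ((eq_zero_iff_of_hasDerivWithinAt_smul ht hz hk).2 h)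

end LinearODE

theorem hasDerivWithinAt_div_of_growth_rates {𝕜 : Type*} [NontriviallyNormedField 𝕜]
    {u v : 𝕜 → 𝕜} {g h t : 𝕜} {s : Set 𝕜} (hu : HasDerivWithinAt u (g * u t) s t)
    (hv : HasDerivWithinAt v (h * v t) s t) (hvt : v t ≠ 0) :
    HasDerivWithinAt (fun r ↦ u r / v r) ((g - h) * (u t / v t)) s t := by
  refine (hu.fun_div hv hvt).congr_deriv ?_
  field_simp

/-- The coefficient `k` of the linear equation `w' = -k (1 - w)` satisfied by the ratio
`w = u / v` of two solutions; `u`, `v` and `x` are the values at one time of the two solutions and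
of the coefficient `ξ`. -/
noncomputable def ratioRate (a u v x : ℝ) : ℝ :=
  a * (u * x) / ((1 + u * x) * (1 + v * x))

section RatioRate

variable {a u v x : ℝ}

theorem ratioRate_nonneg (ha : 0 ≤ a) (hu : 0 ≤ u) (hv : 0 ≤ v) (hx : 0 ≤ x) :
    0 ≤ ratioRate a u v x := by
  unfold ratioRate
  positivity

theorem ratioRate_le (ha : 0 ≤ a) (hu : 0 ≤ u) (hv : 0 ≤ v) (hx : 0 ≤ x) :
    ratioRate a u v x ≤ a := by
  have hux : 0 ≤ u * x := mul_nonneg hu hx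
  have hvx : 0 ≤ v * x := mul_nonneg hv hx
  refine div_le_of_le_mul₀ (by positivity) ha (mul_le_mul_of_nonneg_left ?_ ha)
  calc u * x ≤ 1 + u * x := by linarith
    _ ≤ (1 + u * x) * (1 + v * x) := le_mul_of_one_le_right (by linarith) (by linarith)

theorem norm_ratioRate_le (ha : 0 ≤ a) (hu : 0 ≤ u) (hv : 0 ≤ v) (hx : 0 ≤ x) :
    ‖ratioRate a u v x‖ ≤ a := by
  rw [Real.norm_of_nonneg (ratioRate_nonneg ha hu hv hx)]
  exact ratioRate_le ha hu hv hx

theorem saturation_sub_saturation_mul_div (hv : v ≠ 0) (hux : 1 + u * x ≠ 0)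
    (hvx : 1 + v * x ≠ 0) :
    (a * u * x / (1 + u * x) - a * v * x / (1 + v * x)) * (u / v)
      = -(ratioRate a u v x * (1 - u / v)) := by
  unfold ratioRate
  have hxv : 1 + x * v ≠ 0 := by rwa [mul_comm x v]
  field_simp
  ring

theorem ratioRate_eq_of_ne_zero (hv : v ≠ 0) :
    ratioRate a u v x = a * (u / v) * (v * x) / ((1 + u * x) * (1 + v * x)) := by
  rw [ratioRate, mul_assoc a, ← mul_assoc (u / v), div_mul_cancel₀ u hv]

end RatioRate

theorem hasDerivWithinAt_div_of_saturating_growth {a d t x : ℝ} {u v : ℝ → ℝ} {s : Set ℝ}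
    (hu : HasDerivWithinAt u ((a * u t * x / (1 + u t * x) - d) * u t) s t)
    (hv : HasDerivWithinAt v ((a * v t * x / (1 + v t * x) - d) * v t) s t)
    (hut : 0 ≤ u t) (hvt : 0 < v t) (hx : 0 ≤ x) :
    HasDerivWithinAt (fun r ↦ u r / v r)
      (-(ratioRate a (u t) (v t) x * (1 - u t / v t))) s t := by
  refine (hasDerivWithinAt_div_of_growth_rates hu hv hvt.ne').congr_deriv ?_
  rw [sub_sub_sub_cancel_right]
  exact saturation_sub_saturation_mul_div hvt.ne' (by positivity) (by positivity)

/-- `u` solves the carcinogenesis equation `u' = (a u ξ / (1 + u ξ) - d) u` on `s`. The decay rate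
`d` may depend on time, and derivatives are taken within `s`, hence one-sided at the endpoints of
an interval. -/
def IsGrowthSolutionOn (a : ℝ) (d ξ u : ℝ → ℝ) (s : Set ℝ) : Prop :=
  ∀ t ∈ s, HasDerivWithinAt u ((a * u t * ξ t / (1 + u t * ξ t) - d t) * u t) s t

namespace IsGrowthSolutionOn

variable {a : ℝ} {d ξ u₁ u₂ : ℝ → ℝ} {s J : Set ℝ} {t t₀ t₁ : ℝ}

theorem hasDerivWithinAt_one_sub_div (h₁ : IsGrowthSolutionOn a d ξ u₁ s)
    (h₂ : IsGrowthSolutionOn a d ξ u₂ s) (ht : t ∈ s) (hξ : 0 ≤ ξ t) (hu₁ : 0 ≤ u₁ t)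
    (hu₂ : 0 < u₂ t) :
    HasDerivWithinAt (fun r ↦ 1 - u₁ r / u₂ r)
      (ratioRate a (u₁ t) (u₂ t) (ξ t) * (1 - u₁ t / u₂ t)) s t := by
  have hw := hasDerivWithinAt_div_of_saturating_growth (h₁ t ht) (h₂ t ht) hu₁ hu₂ hξ
  simpa only [neg_neg] using hw.const_sub 1

theorem le_of_le_left (ha : 0 ≤ a) (h₁ : IsGrowthSolutionOn a d ξ u₁ J)
    (h₂ : IsGrowthSolutionOn a d ξ u₂ J) (hξ : ∀ t ∈ J, 0 ≤ ξ t) (hu₁ : ∀ t ∈ J, 0 ≤ u₁ t)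
    (hu₂ : ∀ t ∈ J, 0 < u₂ t) [J.OrdConnected] (ht₀ : t₀ ∈ J) (ht₁ : t₁ ∈ J) (ht : t₀ ≤ t₁)
    (h₀ : u₁ t₀ ≤ u₂ t₀) : u₁ t₁ ≤ u₂ t₁ := by
  have hJ : Icc t₀ t₁ ⊆ J := J.Icc_subset ht₀ ht₁
  have hz : 0 ≤ 1 - u₁ t₁ / u₂ t₁ := nonneg_of_hasDerivWithinAt_mul
    (z := fun t ↦ 1 - u₁ t / u₂ t) ht
    (fun t ht ↦ (h₁.hasDerivWithinAt_one_sub_div h₂ (hJ ht) (hξ t (hJ ht)) (hu₁ t (hJ ht))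
      (hu₂ t (hJ ht))).mono hJ)
    (fun t ht ↦ norm_ratioRate_le ha (hu₁ t (hJ ht)) (hu₂ t (hJ ht)).le (hξ t (hJ ht)))
    (sub_nonneg.2 ((div_le_one (hu₂ t₀ ht₀)).2 h₀))
  exact (div_le_one (hu₂ t₁ ht₁)).1 (sub_nonneg.1 hz)

theorem lt_of_lt_left (ha : 0 ≤ a) (h₁ : IsGrowthSolutionOn a d ξ u₁ J)
    (h₂ : IsGrowthSolutionOn a d ξ u₂ J) (hξ : ∀ t ∈ J, 0 ≤ ξ t) (hu₁ : ∀ t ∈ J, 0 ≤ u₁ t)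
    (hu₂ : ∀ t ∈ J, 0 < u₂ t) [J.OrdConnected] (ht₀ : t₀ ∈ J) (ht₁ : t₁ ∈ J) (ht : t₀ ≤ t₁)
    (h₀ : u₁ t₀ < u₂ t₀) : u₁ t₁ < u₂ t₁ := by
  have hJ : Icc t₀ t₁ ⊆ J := J.Icc_subset ht₀ ht₁
  have hz : 0 < 1 - u₁ t₁ / u₂ t₁ := pos_of_hasDerivWithinAt_mul
    (z := fun t ↦ 1 - u₁ t / u₂ t) ht
    (fun t ht ↦ (h₁.hasDerivWithinAt_one_sub_div h₂ (hJ ht) (hξ t (hJ ht)) (hu₁ t (hJ ht))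
      (hu₂ t (hJ ht))).mono hJ)
    (fun t ht ↦ norm_ratioRate_le ha (hu₁ t (hJ ht)) (hu₂ t (hJ ht)).le (hξ t (hJ ht)))
    (sub_pos.2 ((div_lt_one (hu₂ t₀ ht₀)).2 h₀))
  exact (div_lt_one (hu₂ t₁ ht₁)).1 (sub_pos.1 hz)

theorem antitoneOn_div (ha : 0 ≤ a) (h₁ : IsGrowthSolutionOn a d ξ u₁ J)
    (h₂ : IsGrowthSolutionOn a d ξ u₂ J) (hξ : ∀ t ∈ J, 0 ≤ ξ t) (hu₁ : ∀ t ∈ J, 0 ≤ u₁ t)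
    (hu₂ : ∀ t ∈ J, 0 < u₂ t) [hJ : J.OrdConnected] (hle : ∀ t ∈ J, u₁ t ≤ u₂ t) :
    AntitoneOn (fun t ↦ u₁ t / u₂ t) J := by
  have hderiv : ∀ t ∈ J, HasDerivWithinAt (fun r ↦ u₁ r / u₂ r)
      (-(ratioRate a (u₁ t) (u₂ t) (ξ t) * (1 - u₁ t / u₂ t))) J t := fun t ht ↦
    hasDerivWithinAt_div_of_saturating_growth (h₁ t ht) (h₂ t ht) (hu₁ t ht) (hu₂ t ht) (hξ t ht)
  refine antitoneOn_of_hasDerivWithinAt_nonpos hJ.convex (HasDerivWithinAt.continuousOn hderiv)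
    (fun t ht ↦ (hderiv t (interior_subset ht)).mono interior_subset) fun t ht ↦ ?_
  replace ht := interior_subset ht
  exact neg_nonpos.2 <| mul_nonneg (ratioRate_nonneg ha (hu₁ t ht) (hu₂ t ht).le (hξ t ht))
    (sub_nonneg.2 ((div_le_one (hu₂ t ht)).2 (hle t ht)))

end IsGrowthSolutionOn

theorem stmt_16_general {a : ℝ} (ha : 0 ≤ a) {d ξ : ℝ → ℝ} {T : ℝ≥0∞}
    (hξ : ∀ t : ℝ, 0 ≤ t → ENNReal.ofReal t < T → 0 ≤ ξ t) {u₁ u₂ : ℝ → ℝ}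
    (hu₁nonneg : ∀ t : ℝ, 0 ≤ t → ENNReal.ofReal t < T → 0 ≤ u₁ t)
    (hu₂pos : ∀ t : ℝ, 0 ≤ t → ENNReal.ofReal t < T → 0 < u₂ t)
    (hu₁ : ∀ t : ℝ, 0 ≤ t → ENNReal.ofReal t < T →
      HasDerivAt u₁ ((a * u₁ t * ξ t / (1 + u₁ t * ξ t) - d t) * u₁ t) t)
    (hu₂ : ∀ t : ℝ, 0 ≤ t → ENNReal.ofReal t < T →
      HasDerivAt u₂ ((a * u₂ t * ξ t / (1 + u₂ t * ξ t) - d t) * u₂ t) t)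
    (h0 : u₁ 0 ≤ u₂ 0) :
    AntitoneOn (fun t ↦ u₁ t / u₂ t) {t : ℝ | 0 ≤ t ∧ ENNReal.ofReal t < T} ∧
    (∀ t : ℝ, 0 ≤ t → ENNReal.ofReal t < T → u₁ t ≤ u₂ t) ∧
    (u₁ 0 < u₂ 0 → ∀ t : ℝ, 0 ≤ t → ENNReal.ofReal t < T → u₁ t < u₂ t) ∧
    (∀ t : ℝ, 0 ≤ t → ENNReal.ofReal t < T →
      HasDerivAt (fun s ↦ u₁ s / u₂ s)
        (-(a * (u₁ t / u₂ t) * (u₂ t * ξ t * (1 - u₁ t / u₂ t)) /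
          ((1 + u₁ t * ξ t) * (1 + u₂ t * ξ t)))) t) := by
  set J : Set ℝ := {t | 0 ≤ t ∧ ENNReal.ofReal t < T}
  have hJ : J.OrdConnected :=
    ordConnected_Ici.inter ((isLowerSet_Iio T).preimage ENNReal.ofReal_mono).ordConnected
  have hzero : ∀ t ∈ J, (0 : ℝ) ∈ J := fun t ht ↦
    ⟨le_rfl, (ENNReal.ofReal_le_ofReal ht.1).trans_lt ht.2⟩
  have hξJ : ∀ t ∈ J, 0 ≤ ξ t := fun t ht ↦ hξ t ht.1 ht.2
  have hu₁J : ∀ t ∈ J, 0 ≤ u₁ t := fun t ht ↦ hu₁nonneg t ht.1 ht.2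
  have hu₂J : ∀ t ∈ J, 0 < u₂ t := fun t ht ↦ hu₂pos t ht.1 ht.2
  have h₁ : IsGrowthSolutionOn a d ξ u₁ J := fun t ht ↦ (hu₁ t ht.1 ht.2).hasDerivWithinAt
  have h₂ : IsGrowthSolutionOn a d ξ u₂ J := fun t ht ↦ (hu₂ t ht.1 ht.2).hasDerivWithinAt
  have hle : ∀ t ∈ J, u₁ t ≤ u₂ t := fun t ht ↦
    h₁.le_of_le_left ha h₂ hξJ hu₁J hu₂J (hzero t ht) ht ht.1 h0
  refine ⟨h₁.antitoneOn_div ha h₂ hξJ hu₁J hu₂J hle, fun t ht htT ↦ hle t ⟨ht, htT⟩,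
    fun hlt t ht htT ↦ ?_, fun t ht htT ↦ ?_⟩
  · exact h₁.lt_of_lt_left ha h₂ hξJ hu₁J hu₂J (hzero t ⟨ht, htT⟩) ⟨ht, htT⟩ ht hlt
  · have hderiv := hasDerivWithinAt_univ.1 <| hasDerivWithinAt_div_of_saturating_growth
      (hu₁ t ht htT).hasDerivWithinAt (hu₂ t ht htT).hasDerivWithinAt
      (hu₁nonneg t ht htT) (hu₂pos t ht htT) (hξ t ht htT)
    refine hderiv.congr_deriv ?_
    rw [ratioRate_eq_of_ne_zero (hu₂pos t ht htT).ne']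
    ring

/-- Order preservation and ratio monotonicity for the scalar ODE
`u' = (auξ(t)/(1+uξ(t)) - d)u` with nonnegative coefficient `ξ`. -/
theorem stmt_16 (a d : ℝ) (ha : 0 < a) (hd : 0 < d)
    (T : ℝ≥0∞) (hT : 0 < T)
    (ξ : ℝ → ℝ)
    (hξcont : ContinuousOn ξ {t : ℝ | 0 ≤ t ∧ ENNReal.ofReal t < T})
    (hξnn : ∀ t : ℝ, 0 ≤ t → ENNReal.ofReal t < T → 0 ≤ ξ t)
    (u₁ u₂ : ℝ → ℝ)
    (hu₁pos : ∀ t : ℝ, 0 ≤ t → ENNReal.ofReal t < T → 0 < u₁ t)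
    (hu₂pos : ∀ t : ℝ, 0 ≤ t → ENNReal.ofReal t < T → 0 < u₂ t)
    (hu₁ : ∀ t : ℝ, 0 ≤ t → ENNReal.ofReal t < T →
      HasDerivAt u₁ ((a * u₁ t * ξ t / (1 + u₁ t * ξ t) - d) * u₁ t) t)
    (hu₂ : ∀ t : ℝ, 0 ≤ t → ENNReal.ofReal t < T →
      HasDerivAt u₂ ((a * u₂ t * ξ t / (1 + u₂ t * ξ t) - d) * u₂ t) t)
    (h0 : u₁ 0 ≤ u₂ 0) :
    (∀ t : ℝ, 0 ≤ t → ENNReal.ofReal t < T → u₁ t / u₂ t ≤ u₁ 0 / u₂ 0) ∧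
    (∀ t : ℝ, 0 ≤ t → ENNReal.ofReal t < T → u₁ t ≤ u₂ t) ∧
    (u₁ 0 < u₂ 0 → ∀ t : ℝ, 0 ≤ t → ENNReal.ofReal t < T → u₁ t < u₂ t) ∧
    (∀ t : ℝ, 0 ≤ t → ENNReal.ofReal t < T →
      HasDerivAt (fun s => u₁ s / u₂ s)
        (-(a * (u₁ t / u₂ t) * (u₂ t * ξ t * (1 - u₁ t / u₂ t)) /
          ((1 + u₁ t * ξ t) * (1 + u₂ t * ξ t)))) t) := by
  obtain ⟨hanti, hrest⟩ := stmt_16_general ha.le (d := fun _ ↦ d) hξnn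
    (fun t ht htT ↦ (hu₁pos t ht htT).le) hu₂pos hu₁ hu₂ h0
  exact ⟨fun t ht htT ↦ hanti ⟨le_rfl, by simpa using hT⟩ ⟨ht, htT⟩ ht, hrest⟩
end

section
/- Let a, d, κ₀ > 0, let Ω ⊂ ℝⁿ be a bounded measurable set with |Ω| = 1, and let (u, ξ) be a nonnegative solution of the carcinogenesis shadow system on [0, ∞) with ξ(0) = ξ₀ > 0 and u(x,t) > 0 for all x, t. Let x* ∈ Ω satisfy u(x*, t) = sup_{x ∈ Ω} u(x, t) for all t ≥ 0, and suppose: (i) R₁ := sup_{t ≥ 0} u(x*, t) < ∞; (ii) u(x*, t) ≥ 1 for all t ≥ 0; and (iii) ξ(t) ≤ κ₀ for all t ≥ 0. Set R₂ := min{ξ₀, κ₀/(1 + R₁²)}; then ξ(t) ≥ R₂ for all t ≥ 0, and for every x ∈ Ω with u(x,0) < u(x*,0), the ratio u(x,t)/u(x*,t) is nonincreasing and satisfies u(x,t)/u(x*,t) ≤ (u(x,0)/u(x*,0)) · exp(-a R₂ (1 - u(x,0)/u(x*,0)) t / (1 + R₁κ₀)²). Consequently u(x,t) → 0 exponentially as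 t → ∞ for every such x. -/
open MeasureTheory

/-! With `g(w) = aw/(1+w) - d` the equation for `u` reads `u_t = g(uξ) u`, so the ratio
`r = u(x,·)/u(y,·)` satisfies `r' = -(g(u(y)ξ) - g(u(x)ξ)) r`. As `g` is increasing, `r` is
nonincreasing when `u(x) ≤ u(y)`; hence `u(y) - u(x) = u(y)(1 - r)` stays at least
`m(1 - r(0))` when `u(y) ≥ m`. The equation for `ξ` confines `ξ` to a compact subinterval of
`(0, ∞)`, which turns this separation into a uniform positive lower bound for
`g(u(y)ξ) - g(u(x)ξ)`, and Grönwall's inequality gives the exponential decay of `r`. -/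

section DifferentialInequality

open Set Filter Topology Real

variable {f f' : ℝ → ℝ} {t₀ : ℝ}

theorem le_mul_exp_of_deriv_le {K : ℝ}
    (hf : ∀ t ≥ t₀, HasDerivWithinAt f (f' t) (Ici t₀) t)
    (hf' : ∀ t ≥ t₀, f' t ≤ K * f t) {t : ℝ} (ht : t₀ ≤ t) :
    f t ≤ f t₀ * exp (K * (t - t₀)) := by
  rw [← gronwallBound_ε0]
  refine le_gronwallBound_of_liminf_deriv_right_le (f' := f')
    (fun s hs ↦ (hf s hs.1).continuousWithinAt.mono Icc_subset_Ici_self)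
    (fun s hs _ hr ↦ ((hf s hs.1).mono (Ici_subset_Ici.2 hs.1)).liminf_right_slope_le hr)
    le_rfl (fun s hs ↦ ?_) t (right_mem_Icc.2 ht)
  simpa only [add_zero] using hf' s hs.1

theorem le_max_of_deriv_le_sub_mul {κ L : ℝ} (hL : 0 < L)
    (hf : ∀ t ≥ t₀, HasDerivWithinAt f (f' t) (Ici t₀) t)
    (hf' : ∀ t ≥ t₀, f' t ≤ κ - L * f t) {t : ℝ} (ht : t₀ ≤ t) :
    f t ≤ max (f t₀) (κ / L) := by
  set c := max (f t₀) (κ / L)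
  have hc : κ ≤ L * c := (div_le_iff₀' hL).1 (le_max_right _ _)
  have hexcess : f t - c ≤ (f t₀ - c) * exp (-L * (t - t₀)) :=
    le_mul_exp_of_deriv_le (fun s hs ↦ (hf s hs).sub_const c)
      (fun s hs ↦ by linarith [hf' s hs]) ht
  have hinit : (f t₀ - c) * exp (-L * (t - t₀)) ≤ 0 :=
    mul_nonpos_of_nonpos_of_nonneg (sub_nonpos.2 (le_max_left _ _)) (exp_pos _).le
  linarith

theorem min_le_of_sub_mul_le_deriv {κ L : ℝ} (hL : 0 < L)
    (hf : ∀ t ≥ t₀, HasDerivWithinAt f (f' t) (Ici t₀) t)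
    (hf' : ∀ t ≥ t₀, κ - L * f t ≤ f' t) {t : ℝ} (ht : t₀ ≤ t) :
    min (f t₀) (κ / L) ≤ f t := by
  have hneg : -f t ≤ max (-f t₀) (-κ / L) :=
    le_max_of_deriv_le_sub_mul (f := -f) hL (fun s hs ↦ (hf s hs).neg)
      (fun s hs ↦ by simp only [Pi.neg_apply]; linarith [hf' s hs]) ht
  rwa [neg_div, max_neg_neg, neg_le_neg_iff] at hneg

theorem tendsto_zero_of_le_mul_exp_neg {C c : ℝ} (hc : 0 < c) (hf : ∀ t ≥ t₀, 0 ≤ f t)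
    (hle : ∀ t ≥ t₀, f t ≤ C * exp (-(c * t))) : Tendsto f atTop (𝓝 0) := by
  have hexp : Tendsto (fun t ↦ C * exp (-(c * t))) atTop (𝓝 0) := by
    simpa using
      (tendsto_exp_neg_atTop_nhds_zero.comp (tendsto_id.const_mul_atTop hc)).const_mul C
  exact squeeze_zero' ((eventually_ge_atTop t₀).mono hf) ((eventually_ge_atTop t₀).mono hle) hexp

variable {p q α β : ℝ → ℝ}

theorem hasDerivWithinAt_div_of_rates {s : Set ℝ} {t : ℝ}
    (hp : HasDerivWithinAt p (α t * p t) s t) (hq : HasDerivWithinAt q (β t * q t) s t)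
    (hqt : q t ≠ 0) :
    HasDerivWithinAt (fun t ↦ p t / q t) ((α t - β t) * (p t / q t)) s t :=
  (hp.fun_div hq hqt).congr_deriv (by field_simp)

theorem antitoneOn_div_of_rates_le
    (hp : ∀ t ≥ t₀, HasDerivWithinAt p (α t * p t) (Ici t₀) t)
    (hq : ∀ t ≥ t₀, HasDerivWithinAt q (β t * q t) (Ici t₀) t)
    (hp0 : ∀ t ≥ t₀, 0 ≤ p t) (hq0 : ∀ t ≥ t₀, 0 < q t) (hαβ : ∀ t ≥ t₀, α t ≤ β t) :
    AntitoneOn (fun t ↦ p t / q t) (Ici t₀) := by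
  have hderiv (t : ℝ) (ht : t ≥ t₀) :=
    hasDerivWithinAt_div_of_rates (hp t ht) (hq t ht) (hq0 t ht).ne'
  refine antitoneOn_of_hasDerivWithinAt_nonpos (convex_Ici t₀)
    (fun t ht ↦ (hderiv t ht).continuousWithinAt)
    (fun t ht ↦ (hderiv t (interior_subset ht)).mono interior_subset) (fun t ht ↦ ?_)
  replace ht : t ≥ t₀ := interior_subset ht
  exact mul_nonpos_of_nonpos_of_nonneg (sub_nonpos.2 (hαβ t ht))
    (div_nonneg (hp0 t ht) (hq0 t ht).le)

theorem div_le_div_mul_exp_of_rate_gap {c : ℝ}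
    (hp : ∀ t ≥ t₀, HasDerivWithinAt p (α t * p t) (Ici t₀) t)
    (hq : ∀ t ≥ t₀, HasDerivWithinAt q (β t * q t) (Ici t₀) t)
    (hp0 : ∀ t ≥ t₀, 0 ≤ p t) (hq0 : ∀ t ≥ t₀, 0 < q t) (hgap : ∀ t ≥ t₀, c ≤ β t - α t)
    {t : ℝ} (ht : t₀ ≤ t) :
    p t / q t ≤ p t₀ / q t₀ * exp (-c * (t - t₀)) :=
  le_mul_exp_of_deriv_le
    (fun s hs ↦ hasDerivWithinAt_div_of_rates (hp s hs) (hq s hs) (hq0 s hs).ne')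
    (fun s hs ↦ mul_le_mul_of_nonneg_right (by linarith [hgap s hs])
      (div_nonneg (hp0 s hs) (hq0 s hs).le)) ht

end DifferentialInequality

/-- The net per-capita growth rate `a w / (1 + w) - d` of the cells, as a function of the
product `w = u ξ` of cell density and signal. -/
noncomputable def growthRate (a d w : ℝ) : ℝ := a * w / (1 + w) - d

theorem growthRate_sub_growthRate (a d : ℝ) {v w : ℝ} (hv : 1 + v ≠ 0) (hw : 1 + w ≠ 0) :
    growthRate a d w - growthRate a d v = a * (w - v) / ((1 + v) * (1 + w)) := by
  unfold growthRate
  field_simp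
  ring

theorem div_sq_le_growthRate_sub {a v w B : ℝ} (d : ℝ) (ha : 0 ≤ a) (hv : 0 ≤ v) (hvw : v ≤ w)
    (hwB : w ≤ B) :
    a * (w - v) / (1 + B) ^ 2 ≤ growthRate a d w - growthRate a d v := by
  have hw : 0 ≤ w := hv.trans hvw
  have hdenom : (1 + v) * (1 + w) ≤ (1 + B) ^ 2 := by
    rw [sq]
    exact mul_le_mul (by linarith) (by linarith) (by positivity) (by linarith)
  rw [growthRate_sub_growthRate a d (by positivity) (by positivity)]
  exact div_le_div_of_nonneg_left (mul_nonneg ha (sub_nonneg.2 hvw)) (by positivity) hdenom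

theorem monotoneOn_growthRate {a : ℝ} (d : ℝ) (ha : 0 ≤ a) :
    MonotoneOn (growthRate a d) (Set.Ici 0) := by
  intro v hv w _ hvw
  have hgap := div_sq_le_growthRate_sub d ha hv hvw le_rfl
  have hnonneg : 0 ≤ a * (w - v) / (1 + w) ^ 2 :=
    div_nonneg (mul_nonneg ha (sub_nonneg.2 hvw)) (sq_nonneg _)
  linarith

/-- A nonnegative solution on `[0, ∞)` of the carcinogenesis shadow system over a subset `Ω` of
an arbitrary measure space: space enters only as a label of the cells and through the integral.
The time derivatives are one-sided at `t = 0`. -/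
structure IsShadowSolution {X : Type*} [MeasurableSpace X] (μ : Measure X) (Ω : Set X)
    (a d κ₀ : ℝ) (u : X → ℝ → ℝ) (ξ : ℝ → ℝ) : Prop where
  nonneg_u : ∀ x ∈ Ω, ∀ t ≥ 0, 0 ≤ u x t
  nonneg_ξ : ∀ t ≥ 0, 0 ≤ ξ t
  deriv_u : ∀ x ∈ Ω, ∀ t ≥ 0,
    HasDerivWithinAt (u x) (growthRate a d (u x t * ξ t) * u x t) (Set.Ici 0) t
  deriv_ξ : ∀ t ≥ 0,
    HasDerivWithinAt ξ (-ξ t - ξ t * (∫ x in Ω, u x t ^ 2 ∂μ) + κ₀) (Set.Ici 0) t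
  int_sq : ∀ t ≥ 0, IntegrableOn (fun x ↦ u x t ^ 2) Ω μ

namespace IsShadowSolution

variable {X : Type*} [MeasurableSpace X] {μ : Measure X} {Ω : Set X} {a d κ₀ : ℝ}
  {u : X → ℝ → ℝ} {ξ : ℝ → ℝ}

theorem signal_le_max (h : IsShadowSolution μ Ω a d κ₀ u ξ) {t : ℝ} (ht : 0 ≤ t) :
    ξ t ≤ max (ξ 0) κ₀ := by
  rw [← div_one κ₀]
  refine le_max_of_deriv_le_sub_mul one_pos h.deriv_ξ (fun s hs ↦ ?_) ht
  have hconsumption : 0 ≤ ξ s * ∫ x in Ω, u x s ^ 2 ∂μ :=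
    mul_nonneg (h.nonneg_ξ s hs) (integral_nonneg fun x ↦ sq_nonneg (u x s))
  linarith

theorem setIntegral_sq_le (h : IsShadowSolution μ Ω a d κ₀ u ξ) (hΩ : μ Ω < ⊤) {R t : ℝ}
    (ht : 0 ≤ t) (hR : ∀ x ∈ Ω, u x t ≤ R) :
    ∫ x in Ω, u x t ^ 2 ∂μ ≤ μ.real Ω * R ^ 2 := by
  rw [mul_comm]
  refine (Real.le_norm_self _).trans (norm_setIntegral_le_of_norm_le_const hΩ fun x hx ↦ ?_)
  rw [Real.norm_of_nonneg (sq_nonneg _)]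
  exact pow_le_pow_left₀ (h.nonneg_u x hx t ht) (hR x hx) 2

theorem min_le_signal (h : IsShadowSolution μ Ω a d κ₀ u ξ) (hΩ : μ Ω < ⊤) {R : ℝ}
    (hR : ∀ x ∈ Ω, ∀ t ≥ 0, u x t ≤ R) {t : ℝ} (ht : 0 ≤ t) :
    min (ξ 0) (κ₀ / (1 + μ.real Ω * R ^ 2)) ≤ ξ t := by
  refine min_le_of_sub_mul_le_deriv (by positivity) h.deriv_ξ (fun s hs ↦ ?_) ht
  have hconsumption : ξ s * ∫ x in Ω, u x s ^ 2 ∂μ ≤ ξ s * (μ.real Ω * R ^ 2) :=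
    mul_le_mul_of_nonneg_left (h.setIntegral_sq_le hΩ hs fun x hx ↦ hR x hx s hs)
      (h.nonneg_ξ s hs)
  linarith

variable {x y : X}

theorem antitoneOn_div (h : IsShadowSolution μ Ω a d κ₀ u ξ) (ha : 0 ≤ a) (hx : x ∈ Ω)
    (hy : y ∈ Ω) (hxy : ∀ t ≥ 0, u x t ≤ u y t) (hy0 : ∀ t ≥ 0, 0 < u y t) :
    AntitoneOn (fun t ↦ u x t / u y t) (Set.Ici 0) := by
  refine antitoneOn_div_of_rates_le (h.deriv_u x hx) (h.deriv_u y hy) (h.nonneg_u x hx) hy0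
    fun t ht ↦ ?_
  have hξ := h.nonneg_ξ t ht
  exact monotoneOn_growthRate d ha (mul_nonneg (h.nonneg_u x hx t ht) hξ)
    (mul_nonneg (hy0 t ht).le hξ) (mul_le_mul_of_nonneg_right (hxy t ht) hξ)

theorem mul_one_sub_div_le_sub (h : IsShadowSolution μ Ω a d κ₀ u ξ) (ha : 0 ≤ a) (hx : x ∈ Ω)
    (hy : y ∈ Ω) (hxy : ∀ t ≥ 0, u x t ≤ u y t) {m : ℝ} (hm : 0 < m)
    (hmy : ∀ t ≥ 0, m ≤ u y t) {t : ℝ} (ht : 0 ≤ t) :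
    m * (1 - u x 0 / u y 0) ≤ u y t - u x t := by
  have hy0 : ∀ t ≥ 0, 0 < u y t := fun t ht ↦ hm.trans_le (hmy t ht)
  have hratio : u x t / u y t ≤ u x 0 / u y 0 :=
    h.antitoneOn_div ha hx hy hxy hy0 (Set.mem_Ici.2 le_rfl) ht ht
  have hratio_le_one : u x t / u y t ≤ 1 := div_le_one_of_le₀ (hxy t ht) (hy0 t ht).le
  calc m * (1 - u x 0 / u y 0)
      ≤ m * (1 - u x t / u y t) := by gcongr
    _ ≤ u y t * (1 - u x t / u y t) :=
        mul_le_mul_of_nonneg_right (hmy t ht) (sub_nonneg.2 hratio_le_one)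
    _ = u y t - u x t := by rw [mul_sub, mul_one, mul_div_cancel₀ _ (hy0 t ht).ne']

theorem div_le_growthRate_sub (h : IsShadowSolution μ Ω a d κ₀ u ξ) (ha : 0 ≤ a) (hx : x ∈ Ω)
    (hy : y ∈ Ω) (hxy : ∀ t ≥ 0, u x t ≤ u y t) {m R ρ K : ℝ} (hm : 0 < m)
    (hmy : ∀ t ≥ 0, m ≤ u y t) (hyR : ∀ t ≥ 0, u y t ≤ R) {t : ℝ} (ht : 0 ≤ t)
    (hρ : ρ ≤ ξ t) (hK : ξ t ≤ K) :
    a * ρ * (m * (1 - u x 0 / u y 0)) / (1 + R * K) ^ 2 ≤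
      growthRate a d (u y t * ξ t) - growthRate a d (u x t * ξ t) := by
  have hξ := h.nonneg_ξ t ht
  have hR : 0 ≤ R := hm.le.trans ((hmy t ht).trans (hyR t ht))
  have hinit : 0 ≤ 1 - u x 0 / u y 0 :=
    sub_nonneg.2 (div_le_one_of_le₀ (hxy 0 le_rfl) (hm.le.trans (hmy 0 le_rfl)))
  have hsep := h.mul_one_sub_div_le_sub ha hx hy hxy hm hmy ht
  calc a * ρ * (m * (1 - u x 0 / u y 0)) / (1 + R * K) ^ 2
      ≤ a * ξ t * (u y t - u x t) / (1 + R * K) ^ 2 := by gcongr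
    _ = a * (u y t * ξ t - u x t * ξ t) / (1 + R * K) ^ 2 := by ring
    _ ≤ _ := div_sq_le_growthRate_sub d ha (mul_nonneg (h.nonneg_u x hx t ht) hξ)
        (mul_le_mul_of_nonneg_right (hxy t ht) hξ) (mul_le_mul (hyR t ht) hK hξ hR)

theorem div_le_div_mul_exp (h : IsShadowSolution μ Ω a d κ₀ u ξ) (ha : 0 ≤ a) (hx : x ∈ Ω)
    (hy : y ∈ Ω) (hxy : ∀ t ≥ 0, u x t ≤ u y t) {m R ρ K : ℝ} (hm : 0 < m)
    (hmy : ∀ t ≥ 0, m ≤ u y t) (hyR : ∀ t ≥ 0, u y t ≤ R) (hρ : ∀ t ≥ 0, ρ ≤ ξ t)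
    (hK : ∀ t ≥ 0, ξ t ≤ K) {t : ℝ} (ht : 0 ≤ t) :
    u x t / u y t ≤ u x 0 / u y 0 *
      Real.exp (-(a * ρ * (m * (1 - u x 0 / u y 0)) / (1 + R * K) ^ 2 * t)) := by
  rw [← neg_mul]
  simpa only [sub_zero] using
    div_le_div_mul_exp_of_rate_gap (h.deriv_u x hx) (h.deriv_u y hy) (h.nonneg_u x hx)
      (fun s hs ↦ hm.trans_le (hmy s hs))
      (fun s hs ↦ h.div_le_growthRate_sub ha hx hy hxy hm hmy hyR hs (hρ s hs) (hK s hs)) ht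

theorem tendsto_zero (h : IsShadowSolution μ Ω a d κ₀ u ξ) (ha : 0 < a) (hx : x ∈ Ω)
    (hy : y ∈ Ω) (hxy : ∀ t ≥ 0, u x t ≤ u y t) (hxy0 : u x 0 < u y 0) {m R ρ K : ℝ}
    (hm : 0 < m) (hmy : ∀ t ≥ 0, m ≤ u y t) (hyR : ∀ t ≥ 0, u y t ≤ R) (hρ0 : 0 < ρ)
    (hρ : ∀ t ≥ 0, ρ ≤ ξ t) (hK : ∀ t ≥ 0, ξ t ≤ K) :
    Filter.Tendsto (u x) Filter.atTop (nhds 0) := by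
  have hy0 : ∀ t ≥ 0, 0 < u y t := fun t ht ↦ hm.trans_le (hmy t ht)
  have hR : 0 < R := (hy0 0 le_rfl).trans_le (hyR 0 le_rfl)
  have hK0 : 0 < K := hρ0.trans_le ((hρ 0 le_rfl).trans (hK 0 le_rfl))
  have hinit : 0 < 1 - u x 0 / u y 0 := sub_pos.2 ((div_lt_one (hy0 0 le_rfl)).2 hxy0)
  have hrate : 0 < a * ρ * (m * (1 - u x 0 / u y 0)) / (1 + R * K) ^ 2 := by positivity
  refine tendsto_zero_of_le_mul_exp_neg hrate (h.nonneg_u x hx) (C := R * (u x 0 / u y 0))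
    fun t ht ↦ ?_
  rw [mul_assoc]
  calc u x t
      = u y t * (u x t / u y t) := (mul_div_cancel₀ _ (hy0 t ht).ne').symm
    _ ≤ _ := mul_le_mul (hyR t ht) (h.div_le_div_mul_exp ha.le hx hy hxy hm hmy hyR hρ hK ht)
        (div_nonneg (h.nonneg_u x hx t ht) (hy0 t ht).le) hR.le

end IsShadowSolution

theorem IsCarcSolution.isShadowSolution {n : ℕ} {a d κ₀ : ℝ}
    {Ω : Set (EuclideanSpace ℝ (Fin n))} {u : EuclideanSpace ℝ (Fin n) → ℝ → ℝ} {ξ : ℝ → ℝ}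
    (h : IsCarcSolution a d κ₀ Ω u ξ) : IsShadowSolution volume Ω a d κ₀ u ξ where
  nonneg_u := h.nonneg_u
  nonneg_ξ := h.nonneg_ξ
  deriv_u x hx t ht := by
    simpa only [growthRate, mul_assoc] using (h.deriv_u x hx t ht).hasDerivWithinAt
  deriv_ξ t ht := (h.deriv_ξ t ht).hasDerivWithinAt
  int_sq := h.int_sq

theorem stmt_17_general {X : Type*} [MeasurableSpace X] {μ : Measure X} {Ω : Set X}
    (hΩ : μ Ω < ⊤) {a d κ₀ : ℝ} (ha : 0 < a) (hκ₀ : 0 < κ₀) {u : X → ℝ → ℝ} {ξ : ℝ → ℝ}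
    (hsol : IsShadowSolution μ Ω a d κ₀ u ξ) (hξ₀ : 0 < ξ 0) {y : X} (hy : y ∈ Ω)
    (hmax : ∀ x ∈ Ω, ∀ t ≥ 0, u x t ≤ u y t) {m R : ℝ} (hm : 0 < m)
    (hmy : ∀ t ≥ 0, m ≤ u y t) (hyR : ∀ t ≥ 0, u y t ≤ R) :
    (∀ t ≥ 0, min (ξ 0) (κ₀ / (1 + μ.real Ω * R ^ 2)) ≤ ξ t) ∧
    (∀ x ∈ Ω, u x 0 < u y 0 →
      AntitoneOn (fun t ↦ u x t / u y t) (Set.Ici 0) ∧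
      (∀ t ≥ 0, u x t / u y t ≤ u x 0 / u y 0 *
        Real.exp (-(a * min (ξ 0) (κ₀ / (1 + μ.real Ω * R ^ 2)) * (m * (1 - u x 0 / u y 0)) /
          (1 + R * max (ξ 0) κ₀) ^ 2 * t))) ∧
      Filter.Tendsto (u x) Filter.atTop (nhds 0)) := by
  have hlower : ∀ t ≥ 0, min (ξ 0) (κ₀ / (1 + μ.real Ω * R ^ 2)) ≤ ξ t := fun _ ht ↦
    hsol.min_le_signal hΩ (fun x hx t ht ↦ (hmax x hx t ht).trans (hyR t ht)) ht
  have hupper : ∀ t ≥ 0, ξ t ≤ max (ξ 0) κ₀ := fun _ ht ↦ hsol.signal_le_max ht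
  have hlower_pos : 0 < min (ξ 0) (κ₀ / (1 + μ.real Ω * R ^ 2)) :=
    lt_min hξ₀ (by positivity)
  refine ⟨hlower, fun x hx hxy0 ↦ ⟨?_, fun t ht ↦ ?_, ?_⟩⟩
  · exact hsol.antitoneOn_div ha.le hx hy (hmax x hx) fun t ht ↦ hm.trans_le (hmy t ht)
  · exact hsol.div_le_div_mul_exp ha.le hx hy (hmax x hx) hm hmy hyR hlower hupper ht
  · exact hsol.tendsto_zero ha hx hy (hmax x hx) hxy0 hm hmy hyR hlower_pos hlower hupper

/-- If the spatial maximum `u(x*,·)` of a solution of the carcinogenesis shadow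
system stays bounded, then `ξ` is bounded below by `R₂ > 0` and, at every point
with a strictly smaller initial value, `u(x,·)/u(x*,·)` decays exponentially, so
`u(x,t) → 0` as `t → ∞`. -/
theorem stmt_17 {n : ℕ} (a d κ₀ : ℝ) (ha : 0 < a) (hd : 0 < d) (hκ₀ : 0 < κ₀)
    (Ω : Set (EuclideanSpace ℝ (Fin n)))
    (hΩbdd : Bornology.IsBounded Ω) (hΩmeas : MeasurableSet Ω)
    (hΩvol : volume Ω = 1)
    (u : EuclideanSpace ℝ (Fin n) → ℝ → ℝ) (ξ : ℝ → ℝ)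
    (hsol : IsCarcSolution a d κ₀ Ω u ξ)
    (ξ₀ : ℝ) (hξ0 : ξ 0 = ξ₀) (hξ₀pos : 0 < ξ₀)
    (hupos : ∀ x ∈ Ω, ∀ t : ℝ, 0 ≤ t → 0 < u x t)
    (xstar : EuclideanSpace ℝ (Fin n)) (hxstar : xstar ∈ Ω)
    (hmax : ∀ x ∈ Ω, ∀ t : ℝ, 0 ≤ t → u x t ≤ u xstar t)
    (R₁ : ℝ) (hR₁ : ∀ t : ℝ, 0 ≤ t → u xstar t ≤ R₁)
    (hstar_ge1 : ∀ t : ℝ, 0 ≤ t → 1 ≤ u xstar t)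
    (hξκ : ∀ t : ℝ, 0 ≤ t → ξ t ≤ κ₀) :
    (∀ t : ℝ, 0 ≤ t → min ξ₀ (κ₀ / (1 + R₁ ^ 2)) ≤ ξ t) ∧
    (∀ x ∈ Ω, u x 0 < u xstar 0 →
      AntitoneOn (fun t => u x t / u xstar t) (Set.Ici 0) ∧
      (∀ t : ℝ, 0 ≤ t →
        u x t / u xstar t ≤ (u x 0 / u xstar 0) *
          Real.exp (-(a * min ξ₀ (κ₀ / (1 + R₁ ^ 2)) *
            (1 - u x 0 / u xstar 0) * t / (1 + R₁ * κ₀) ^ 2))) ∧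
      Filter.Tendsto (fun t => u x t) Filter.atTop (nhds 0)) := by
  simpa [Measure.real, hΩvol, hξ0, max_eq_right (hξ0 ▸ hξκ 0 le_rfl), mul_div_right_comm] using
    stmt_17_general (hΩvol ▸ ENNReal.one_lt_top) ha hκ₀ hsol.isShadowSolution (hξ0 ▸ hξ₀pos)
      hxstar hmax one_pos hstar_ge1 hR₁
end
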